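/- Let α ∈ ℤ[i] with α ≠ 0, and let ᾱ denote its complex conjugate. Then there exist d₁, d₂, r, s, u, v ∈ ℤ[i] with d₁ ≠ 0 and d₂ ≠ 0 such that d₁·r² − d₂·s² = α, d₁·u² − d₂·v² = ᾱ, and the ratio d₁/d₂ is not a square in ℚ(i): there is no β ∈ ℚ(i) with d₁ = β²·d₂. -/

import Mathlib

/-!
Take `r = 0`, `s = u = 1`, `d₂ = -α` and `d₁ = ᾱ - α v²` with `v` a rational integer: both
equations hold identically, so only the choice of `v` matters. If `d₁ = β² d₂` with `β ∈ ℚ(i)`,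
then `w = αβ` satisfies `(αv - w)(αv + w) = N`, where `N = αᾱ`. Since `w²` is a Gaussian integer,
`2w` is one too (`exists_int_two_mul_eq`), so `2αv - 2w` and `2αv + 2w` are Gaussian integers with
product `4N`. Such factors have bounded norms, hence so has `αv`, and `v = N + 1` is already too
large (`no_large_factorization`).
-/

noncomputable section

/-- Membership in the ring of Gaussian integers, viewed inside `ℂ`. -/
def IsGaussInt (x : ℂ) : Prop := ∃ m n : ℤ, x = (m : ℂ) + (n : ℂ) * Complex.I

/-- Membership in the field `ℚ(i)`, viewed inside `ℂ`. -/
def IsGaussRat (x : ℂ) : Prop := ∃ p q : ℚ, x = (p : ℂ) + (q : ℂ) * Complex.I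

/-- A rational number whose square is an integer is an integer. -/
lemma rat_eq_int_of_sq_eq_int (x : ℚ) (k : ℤ) (h : x ^ 2 = k) : ∃ a : ℤ, x = a := by
  have hx : IsIntegral ℤ x := by
    refine IsIntegral.of_pow (n := 2) (by norm_num) ?_
    rw [h]
    exact isIntegral_algebraMap (R := ℤ) (A := ℚ) (x := k)
  obtain ⟨a, ha⟩ := IsIntegrallyClosed.isIntegral_iff.mp hx
  exact ⟨a, by simpa using ha.symm⟩

/-- If the square of `a + b i` (with `a`, `b` rational) is a Gaussian integer, then so is
`2 (a + b i)`. -/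
lemma exists_int_two_mul_eq (a b : ℚ) (k l : ℤ) (h₁ : a ^ 2 - b ^ 2 = k) (h₂ : 2 * a * b = l) :
    ∃ A B : ℤ, 2 * a = A ∧ 2 * b = B := by
  -- The norm `a ^ 2 + b ^ 2` is an integer because its square is the norm of an integer point.
  obtain ⟨c, hc⟩ := rat_eq_int_of_sq_eq_int (a ^ 2 + b ^ 2) (k ^ 2 + l ^ 2) (by
    push_cast
    rw [← h₁, ← h₂]
    ring)
  obtain ⟨A, hA⟩ := rat_eq_int_of_sq_eq_int (2 * a) (2 * (c + k)) (by
    push_cast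
    rw [← h₁, ← hc]
    ring)
  obtain ⟨B, hB⟩ := rat_eq_int_of_sq_eq_int (2 * b) (2 * (c - k)) (by
    push_cast
    rw [← h₁, ← hc]
    ring)
  exact ⟨A, B, hA, hB⟩

/-- With `α = m + n i`, `N = αᾱ`, `v = N + 1` and `W = A + B i`, the equation `W² = 4 (α² v² - N)`,
split into real and imaginary parts, has no integer solution. -/
lemma no_large_factorization (m n A B N v : ℤ) (hN : N = m ^ 2 + n ^ 2) (hpos : 0 < N)
    (hv : v = N + 1) (h₁ : A ^ 2 - B ^ 2 = 4 * ((m ^ 2 - n ^ 2) * v ^ 2 - N))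
    (h₂ : A * B = 4 * (m * n * v ^ 2)) : False := by
  -- The norms of the two factors `2αv - W` and `2αv + W`.
  obtain ⟨P, hP⟩ : ∃ P, P = (2 * m * v - A) ^ 2 + (2 * n * v - B) ^ 2 := ⟨_, rfl⟩
  obtain ⟨Q, hQ⟩ : ∃ Q, Q = (2 * m * v + A) ^ 2 + (2 * n * v + B) ^ 2 := ⟨_, rfl⟩
  have hPQ : P * Q = 16 * N ^ 2 := by
    have e₁ : (2 * m * v - A) * (2 * m * v + A) - (2 * n * v - B) * (2 * n * v + B) = 4 * N := by
      linear_combination -h₁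
    have e₂ : (2 * m * v - A) * (2 * n * v + B) + (2 * n * v - B) * (2 * m * v + A) = 0 := by
      linear_combination -2 * h₂
    calc P * Q = ((2 * m * v - A) * (2 * m * v + A) - (2 * n * v - B) * (2 * n * v + B)) ^ 2
          + ((2 * m * v - A) * (2 * n * v + B) + (2 * n * v - B) * (2 * m * v + A)) ^ 2 := by
            rw [hP, hQ]; ring
      _ = 16 * N ^ 2 := by rw [e₁, e₂]; ring
  have hP0 : 0 ≤ P := by rw [hP]; positivity
  have hQ0 : 0 ≤ Q := by rw [hQ]; positivity
  have hPQpos : 0 < P * Q := by rw [hPQ]; positivity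
  have hP1 : 1 ≤ P := pos_of_mul_pos_left hPQpos hQ0
  have hQ1 : 1 ≤ Q := pos_of_mul_pos_right hPQpos hP0
  have hle : P + Q ≤ 16 * N ^ 2 + 1 := by
    nlinarith [mul_nonneg (sub_nonneg.mpr hP1) (sub_nonneg.mpr hQ1)]
  have hsum : P + Q = 8 * N * v ^ 2 + 2 * (A ^ 2 + B ^ 2) := by rw [hP, hQ, hN]; ring
  have hN3 : 0 < N ^ 3 := by positivity
  subst hv
  nlinarith [sq_nonneg A, sq_nonneg B]

theorem exists_pell_data_for_gaussian_integer
    (α : ℂ) (hα : IsGaussInt α) (h0 : α ≠ 0) :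
    ∃ d₁ d₂ r s u v : ℂ,
      IsGaussInt d₁ ∧ IsGaussInt d₂ ∧ IsGaussInt r ∧ IsGaussInt s ∧
      IsGaussInt u ∧ IsGaussInt v ∧
      d₁ ≠ 0 ∧ d₂ ≠ 0 ∧
      d₁ * r ^ 2 - d₂ * s ^ 2 = α ∧
      d₁ * u ^ 2 - d₂ * v ^ 2 = (starRingEnd ℂ) α ∧
      ¬∃ β : ℂ, IsGaussRat β ∧ d₁ = β ^ 2 * d₂ := by
  obtain ⟨m, n, rfl⟩ := hα
  obtain ⟨N, hN⟩ : ∃ N : ℤ, N = m ^ 2 + n ^ 2 := ⟨_, rfl⟩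
  obtain ⟨v, hv⟩ : ∃ v : ℤ, v = N + 1 := ⟨_, rfl⟩
  have hpos : 0 < N := by
    have hmn : m ≠ 0 ∨ n ≠ 0 := by
      by_contra! h
      exact h0 (by simp [h.1, h.2])
    rw [hN]
    rcases hmn with h | h <;> positivity
  have hconj : (starRingEnd ℂ) ((m : ℂ) + (n : ℂ) * Complex.I) = (m : ℂ) - (n : ℂ) * Complex.I := by
    simp [sub_eq_add_neg]
  have key : ¬∃ β : ℂ, IsGaussRat β ∧
      ((m : ℂ) - n * Complex.I) - (m + n * Complex.I) * (v : ℂ) ^ 2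
        = β ^ 2 * -((m : ℂ) + n * Complex.I) := by
    rintro ⟨_, ⟨p, q, rfl⟩, h⟩
    -- The equation `w ^ 2 = α ^ 2 * v ^ 2 - N` for `w = α * β`.
    have hw : (((m * p - n * q : ℚ) : ℂ) + ((m * q + n * p : ℚ) : ℂ) * Complex.I) ^ 2
        = (((m ^ 2 - n ^ 2) * v ^ 2 - N : ℚ) : ℂ) + ((2 * (m * n * v ^ 2) : ℚ) : ℂ) * Complex.I := by
      rw [hN]
      push_cast
      have hI := Complex.I_sq
      have e : (((m : ℂ) + n * Complex.I) * (p + q * Complex.I)) ^ 2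
          = ((m : ℂ) + n * Complex.I) ^ 2 * v ^ 2
            - (m + n * Complex.I) * (m - n * Complex.I) := by
        linear_combination ((m : ℂ) + n * Complex.I) * h
      have e' : (m : ℂ) * p - n * q + (m * q + n * p) * Complex.I
          = ((m : ℂ) + n * Complex.I) * (p + q * Complex.I) := by
        linear_combination (-(n : ℂ) * q) * hI
      rw [e', e]
      linear_combination ((n : ℂ) ^ 2 * v ^ 2 + n ^ 2) * hI
    obtain ⟨a, ha⟩ : ∃ a : ℚ, a = m * p - n * q := ⟨_, rfl⟩
    obtain ⟨b, hb⟩ : ∃ b : ℚ, b = m * q + n * p := ⟨_, rfl⟩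
    rw [← ha, ← hb] at hw
    have hsq : ((a : ℂ) + (b : ℂ) * Complex.I) ^ 2
        = ((a ^ 2 - b ^ 2 : ℚ) : ℂ) + ((2 * a * b : ℚ) : ℂ) * Complex.I := by
      push_cast
      linear_combination ((b : ℂ) ^ 2) * Complex.I_sq
    rw [hsq] at hw
    have hre : a ^ 2 - b ^ 2 = (m ^ 2 - n ^ 2) * v ^ 2 - N := by
      have := congrArg Complex.re hw
      simp only [Complex.add_re, Complex.mul_re, Complex.ratCast_re, Complex.ratCast_im,
        Complex.I_re, Complex.I_im, mul_zero, zero_mul, sub_zero, add_zero] at this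
      exact_mod_cast this
    have him : 2 * a * b = 2 * (m * n * v ^ 2) := by
      have := congrArg Complex.im hw
      simp only [Complex.add_im, Complex.mul_im, Complex.ratCast_re, Complex.ratCast_im,
        Complex.I_re, Complex.I_im, mul_zero, mul_one, zero_add, add_zero] at this
      exact_mod_cast this
    obtain ⟨A, B, hA, hB⟩ := exists_int_two_mul_eq a b ((m ^ 2 - n ^ 2) * v ^ 2 - N)
      (2 * (m * n * v ^ 2)) (by rw [hre]; push_cast; ring) (by rw [him]; push_cast; ring)
    refine no_large_factorization m n A B N v hN hpos hv ?_ ?_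
    · have : (A : ℚ) ^ 2 - B ^ 2 = 4 * ((m ^ 2 - n ^ 2) * v ^ 2 - N) := by
        rw [← hA, ← hB]
        linear_combination 4 * hre
      exact_mod_cast this
    · have : (A : ℚ) * B = 4 * (m * n * v ^ 2) := by
        rw [← hA, ← hB]
        linear_combination 2 * him
      exact_mod_cast this
  refine ⟨((m : ℂ) - n * Complex.I) - (m + n * Complex.I) * (v : ℂ) ^ 2,
    -((m : ℂ) + n * Complex.I), 0, 1, 1, v, ⟨m - m * v ^ 2, -n - n * v ^ 2, ?_⟩, ⟨-m, -n, ?_⟩,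
    ⟨0, 0, ?_⟩, ⟨1, 0, ?_⟩, ⟨1, 0, ?_⟩, ⟨v, 0, ?_⟩, ?_, neg_ne_zero.mpr h0, ?_, ?_, key⟩
  · push_cast; ring
  · push_cast; ring
  · simp
  · simp
  · simp
  · simp
  · -- `d₁ = 0` would make `d₁ / d₂` the square of `0`.
    intro h
    exact key ⟨0, ⟨0, 0, by simp⟩, by rw [h]; ring⟩
  · ring
  · rw [hconj]; ring
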